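/- Let R be a regular local ring of dimension 2 with residue field k, and let I ⊆ J be ideals of R such that R/I and R/J have finite length. Then the restriction map Hom_R(J, R) → Hom_R(I, R) is an isomorphism, and both are isomorphic to R (via the inclusion Hom_R(R,R) → Hom_R(J,R)). -/

import Mathlib

open CategoryTheory IsLocalRing

open RingTheory.Sequence

/-!
If `a, b ∈ J` form a weakly regular sequence on `M`, every `φ : J →ₗ[R] M` is multiplication by an
element of `M`: from `b • φ a = a • φ b` one gets `φ a = a • m`, and cancelling `a` in
`a • φ j = j • φ a` gives `φ j = j • m`. An ideal of finite colength in a local ring contains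
powers of any `x, y` in the maximal ideal, and powers of a weakly regular pair are again
weakly regular. A regular local ring of dimension at least two has such a pair: for `x ∈ 𝔪 \ 𝔪²`
the quotient `R ⧸ (x)` is again regular local, hence a domain by induction on the dimension,
so any `y ∈ 𝔪 \ (x)` will do.
-/

section WeaklyRegularPair

variable {R M : Type*} [CommRing R] [AddCommGroup M] [Module R M]

theorem isWeaklyRegular_pair_iff {a b : R} :
    IsWeaklyRegular M [a, b] ↔
      IsSMulRegular M a ∧ ∀ m n : M, b • m = a • n → ∃ m', m = a • m' := by
  rw [isWeaklyRegular_cons_iff, isWeaklyRegular_singleton_iff,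
    isSMulRegular_quotient_iff_mem_of_smul_mem]
  simp only [Submodule.mem_smul_pointwise_iff_exists, Submodule.mem_top, true_and,
    forall_exists_index, eq_comm]

theorem isWeaklyRegular_pair_of_prime [IsDomain R] {x y : R} (hx : Prime x) (hxy : ¬ x ∣ y) :
    IsWeaklyRegular R [x, y] :=
  isWeaklyRegular_pair_iff.mpr ⟨IsSMulRegular.of_ne_zero hx.ne_zero, fun _ n h ↦
    (hx.dvd_or_dvd ⟨n, h⟩).resolve_left hxy⟩

theorem isWeaklyRegular_pair_pow_left {a b : R} (h : IsWeaklyRegular M [a, b]) (n : ℕ) :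
    IsWeaklyRegular M [a ^ n, b] := by
  obtain ⟨ha, hb⟩ := isWeaklyRegular_pair_iff.mp h
  refine isWeaklyRegular_pair_iff.mpr ⟨ha.pow n, ?_⟩
  induction n with
  | zero => exact fun m _ _ ↦ ⟨m, by simp⟩
  | succ n ih =>
    intro m p hmp
    obtain ⟨q, rfl⟩ := ih m (a • p) (by rw [hmp, pow_succ, mul_smul])
    have hq : b • q = a • p := ha.pow n <| by
      simpa only [pow_succ, mul_smul, smul_comm b] using hmp
    obtain ⟨r, rfl⟩ := hb q p hq
    exact ⟨r, by rw [pow_succ, mul_smul]⟩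

theorem isWeaklyRegular_pair_pow_right {a b : R} (h : IsWeaklyRegular M [a, b]) (n : ℕ) :
    IsWeaklyRegular M [a, b ^ n] := by
  simp only [isWeaklyRegular_cons_iff, IsWeaklyRegular.nil, and_true] at h ⊢
  exact ⟨h.1, h.2.pow n⟩

theorem exists_isWeaklyRegular_pair_mem_of_isFiniteLength_quotient [IsLocalRing R] {x y : R}
    (hx : x ∈ maximalIdeal R) (hy : y ∈ maximalIdeal R) (hxy : IsWeaklyRegular M [x, y])
    {I : Ideal R} (hI : IsFiniteLength R (R ⧸ I)) :
    ∃ a ∈ I, ∃ b ∈ I, IsWeaklyRegular M [a, b] := by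
  have : IsArtinianRing (R ⧸ I) :=
    isArtinian_of_tower R (isFiniteLength_iff_isNoetherian_isArtinian.mp hI).2
  obtain ⟨n, hn⟩ := exists_maximalIdeal_pow_le_of_isArtinianRing_quotient I
  exact ⟨x ^ n, hn (Ideal.pow_mem_pow hx n), y ^ n, hn (Ideal.pow_mem_pow hy n),
    isWeaklyRegular_pair_pow_right (isWeaklyRegular_pair_pow_left hxy n) n⟩

theorem coe_smul_apply_comm {J : Ideal R} (φ : J →ₗ[R] M) (i j : J) :
    (i : R) • φ j = (j : R) • φ i := by
  rw [← map_smul, ← map_smul]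
  exact congrArg φ (Subtype.ext (mul_comm _ _))

theorem bijective_toSpanSingleton_domRestrict_of_isWeaklyRegular {J : Ideal R} {a b : R}
    (ha : a ∈ J) (hb : b ∈ J) (hab : IsWeaklyRegular M [a, b]) :
    Function.Bijective fun m : M ↦ (LinearMap.toSpanSingleton R M m).domRestrict J := by
  obtain ⟨ha_reg, hb_reg⟩ := isWeaklyRegular_pair_iff.mp hab
  constructor
  · intro m n hmn
    exact ha_reg (by simpa using LinearMap.congr_fun hmn ⟨a, ha⟩)
  · intro φ
    obtain ⟨m, hm⟩ := hb_reg _ _ (coe_smul_apply_comm φ ⟨b, hb⟩ ⟨a, ha⟩)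
    refine ⟨m, LinearMap.ext fun j ↦ ha_reg ?_⟩
    calc a • (j : R) • m = (j : R) • φ ⟨a, ha⟩ := by rw [smul_comm, hm]
      _ = a • φ j := coe_smul_apply_comm φ j ⟨a, ha⟩

theorem bijective_comp_inclusion_of_isWeaklyRegular {I J : Ideal R} (hIJ : I ≤ J)
    {a b : R} (ha : a ∈ I) (hb : b ∈ I) (hab : IsWeaklyRegular M [a, b]) :
    Function.Bijective fun φ : J →ₗ[R] M ↦ φ.comp (Submodule.inclusion hIJ) :=
  (Function.Bijective.of_comp_iff _
    (bijective_toSpanSingleton_domRestrict_of_isWeaklyRegular (hIJ ha) (hIJ hb) hab)).mp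
    (bijective_toSpanSingleton_domRestrict_of_isWeaklyRegular ha hb hab)

end WeaklyRegularPair

theorem bijective_smul_subtype_of_isWeaklyRegular {R : Type*} [CommRing R]
    {J : Ideal R} {a b : R} (ha : a ∈ J) (hb : b ∈ J) (hab : IsWeaklyRegular R [a, b]) :
    Function.Bijective fun r : R ↦ r • Submodule.subtype J := by
  convert bijective_toSpanSingleton_domRestrict_of_isWeaklyRegular ha hb hab using 2 with r
  ext j
  exact mul_comm r j

section LocalRing

variable {R : Type*} [CommRing R]

theorem isDomain_of_isPrime_span_singleton [IsNoetherianRing R] {x : R}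
    (hx : x ∈ (⊥ : Ideal R).jacobson) (hprime : (Ideal.span {x}).IsPrime)
    (hmin : ∀ P ∈ minimalPrimes R, x ∉ P) : IsDomain R := by
  obtain ⟨Q, hQ, hQx⟩ := Ideal.exists_minimalPrimes_le (bot_le : ⊥ ≤ Ideal.span {x})
  have hQprime : Q.IsPrime := hQ.1.1
  have hQ_le : Q ≤ Ideal.span {x} • Q := by
    intro q hq
    obtain ⟨c, rfl⟩ := Ideal.mem_span_singleton.mp (hQx hq)
    have hc : c ∈ Q := (hQprime.mem_or_mem hq).resolve_left (hmin Q hQ)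
    exact Submodule.smul_mem_smul (Ideal.mem_span_singleton_self x) hc
  have hQ_bot : Q = ⊥ := Submodule.eq_bot_of_le_smul_of_le_jacobson_bot _ Q
    (IsNoetherian.noetherian Q) hQ_le ((Ideal.span_singleton_le_iff_mem _).mpr hx)
  rw [hQ_bot] at hQprime
  exact IsDomain.of_bot_isPrime R

variable [IsLocalRing R] [IsNoetherianRing R]

theorem maximalIdeal_mem_minimalPrimes_of_le_sq (h : maximalIdeal R ≤ maximalIdeal R ^ 2) :
    maximalIdeal R ∈ minimalPrimes R := by
  have hbot : maximalIdeal R = ⊥ := Submodule.eq_bot_of_le_smul_of_le_jacobson_bot _ _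
    (IsNoetherian.noetherian _) (by rwa [smul_eq_mul, ← sq]) (maximalIdeal_le_jacobson _)
  exact ⟨⟨inferInstance, bot_le⟩, fun _ _ _ ↦ hbot.trans_le bot_le⟩

theorem exists_mem_maximalIdeal_notMem_sq_notMem_minimalPrimes
    (h : maximalIdeal R ∉ minimalPrimes R) :
    ∃ x ∈ maximalIdeal R, x ∉ maximalIdeal R ^ 2 ∧ ∀ P ∈ minimalPrimes R, x ∉ P := by
  by_contra! hcover
  have hfin : (insert (maximalIdeal R ^ 2) (minimalPrimes R)).Finite :=
    (Ideal.finite_minimalPrimes_of_isNoetherianRing R ⊥).insert _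
  obtain ⟨P, rfl | hP, hle⟩ := (Ideal.subset_union_prime_finite hfin (f := id)
      (maximalIdeal R ^ 2) (maximalIdeal R ^ 2)
      fun P hP hne _ ↦ (hP.resolve_left hne).1.1).mp fun x hx ↦ by
    by_cases hsq : x ∈ maximalIdeal R ^ 2
    · exact Set.mem_biUnion (Set.mem_insert _ _) hsq
    · obtain ⟨P, hP, hxP⟩ := hcover x hx hsq
      exact Set.mem_biUnion (Set.mem_insert_of_mem _ hP) hxP
  · exact h (maximalIdeal_mem_minimalPrimes_of_le_sq hle)
  · have hP_eq : maximalIdeal R = P := (maximalIdeal.isMaximal R).eq_of_le hP.1.1.ne_top hle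
    exact h (hP_eq ▸ hP)

theorem exists_finset_span_insert_eq_maximalIdeal {x : R} (hx : x ∈ maximalIdeal R)
    (hx_sq : x ∉ maximalIdeal R ^ 2) :
    ∃ s : Finset R, Ideal.span (insert x (s : Set R)) = maximalIdeal R ∧
      s.card + 1 = (maximalIdeal R).spanFinrank := by
  classical
  obtain ⟨t, ht_card, ht⟩ := Submodule.FG.exists_span_finset_card_eq_spanFinrank
    (IsNoetherian.noetherian (maximalIdeal R))
  have ht_mem : ∀ z ∈ t, z ∈ maximalIdeal R := fun z hz ↦ ht ▸ Submodule.subset_span hz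
  obtain ⟨c, -, hc⟩ := Submodule.mem_span_finset.mp (ht.symm ▸ hx)
  obtain ⟨z, hz, hcz⟩ : ∃ z ∈ t, IsUnit (c z) := by
    by_contra! hc_nonunit
    refine hx_sq (hc ▸ Ideal.sum_mem _ fun z hz ↦ ?_)
    rw [sq]
    exact Ideal.mul_mem_mul ((mem_maximalIdeal _).mpr (hc_nonunit z hz)) (ht_mem z hz)
  refine ⟨t.erase z, le_antisymm ?_ ?_, by rw [Finset.card_erase_add_one hz, ht_card]⟩
  · rw [Ideal.span_le, Set.insert_subset_iff]
    exact ⟨hx, fun w hw ↦ ht_mem w (Finset.mem_of_mem_erase hw)⟩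
  · have hw_mem : ∀ w ∈ t.erase z, w ∈ Ideal.span (insert x (t.erase z : Set R)) :=
      fun w hw ↦ Ideal.subset_span (Set.mem_insert_of_mem _ hw)
    have hcz_eq : c z * z = x - ∑ w ∈ t.erase z, c w • w :=
      eq_sub_of_add_eq ((Finset.add_sum_erase t _ hz).trans hc)
    have hz_mem : z ∈ Ideal.span (insert x (t.erase z : Set R)) := by
      rw [← Ideal.unit_mul_mem_iff_mem _ hcz, hcz_eq]
      exact sub_mem (Ideal.subset_span (Set.mem_insert _ _)) <| Ideal.sum_mem _ fun w hw ↦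
        Ideal.mul_mem_left _ _ (hw_mem w hw)
    rw [← ht]
    refine Submodule.span_le.mpr fun w hw ↦ ?_
    obtain rfl | hwz := eq_or_ne w z
    · exact hz_mem
    · exact hw_mem w (Finset.mem_erase.mpr ⟨hwz, hw⟩)

theorem spanFinrank_map_maximalIdeal_quotient_add_one_le {x : R} (hx : x ∈ maximalIdeal R)
    (hx_sq : x ∉ maximalIdeal R ^ 2) :
    ((maximalIdeal R).map (Ideal.Quotient.mk (Ideal.span {x}))).spanFinrank + 1 ≤
      (maximalIdeal R).spanFinrank := by
  obtain ⟨s, hs, hs_card⟩ := exists_finset_span_insert_eq_maximalIdeal hx hx_sq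
  have hx_zero : Ideal.Quotient.mk (Ideal.span {x}) x = 0 :=
    Ideal.Quotient.eq_zero_iff_mem.mpr (Ideal.mem_span_singleton_self x)
  rw [← hs_card, ← hs, Ideal.map_span, Set.image_insert_eq, hx_zero, Ideal.span_insert_zero]
  gcongr
  calc _ ≤ (Ideal.Quotient.mk (Ideal.span {x}) '' s).ncard :=
        Submodule.spanFinrank_span_le_ncard_of_finite (s.finite_toSet.image _)
    _ ≤ s.card := (Set.ncard_image_le s.finite_toSet).trans_eq (Set.ncard_coe_finset s)

end LocalRing

section RegularLocalRing

variable {R : Type*} [CommRing R] [IsRegularLocalRing R]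

theorem isRegularLocalRing_quotient_span_singleton {x : R} (hx : x ∈ maximalIdeal R)
    (hx_sq : x ∉ maximalIdeal R ^ 2) : IsRegularLocalRing (R ⧸ Ideal.span {x}) := by
  have : Nontrivial (R ⧸ Ideal.span {x}) := Ideal.Quotient.nontrivial_iff.mpr <|
    Ideal.span_singleton_ne_top ((mem_maximalIdeal x).mp hx)
  have : IsLocalRing (R ⧸ Ideal.span {x}) :=
    .of_surjective' (Ideal.Quotient.mk _) Ideal.Quotient.mk_surjective
  refine .of_spanFinrank_maximalIdeal_le _ ?_
  rw [← map_maximalIdeal_of_surjective _ Ideal.Quotient.mk_surjective]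
  refine ENat.WithBot.add_le_add_one_right_iff.mp ?_
  calc _ ≤ ((maximalIdeal R).spanFinrank : WithBot ℕ∞) := by
        exact_mod_cast spanFinrank_map_maximalIdeal_quotient_add_one_le hx hx_sq
    _ = (maximalIdeal R).height := by
        rw [(isRegularLocalRing_iff R).mp ‹_›, maximalIdeal_height_eq_ringKrullDim]
    _ ≤ ringKrullDim (R ⧸ Ideal.span {x}) + 1 := Ideal.height_le_ringKrullDim_quotient_add_one hx

theorem maximalIdeal_eq_bot_of_mem_minimalPrimes (h : maximalIdeal R ∈ minimalPrimes R) :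
    maximalIdeal R = ⊥ := by
  have hdim : ((maximalIdeal R).spanFinrank : WithBot ℕ∞) = 0 := by
    rw [(isRegularLocalRing_iff R).mp ‹_›, ← maximalIdeal_height_eq_ringKrullDim,
      Ideal.height_eq_zero_iff.mpr h, WithBot.coe_zero]
  exact (Submodule.spanFinrank_eq_zero_iff_eq_bot (IsNoetherian.noetherian _)).mp
    (by exact_mod_cast hdim)

end RegularLocalRing

theorem isDomain_of_isRegularLocalRing (R : Type*) [CommRing R] [IsRegularLocalRing R] :
    IsDomain R := by
  induction hn : (maximalIdeal R).spanFinrank using Nat.strong_induction_on generalizing R with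
  | _ n ih =>
    by_cases hmin : maximalIdeal R ∈ minimalPrimes R
    · have : (⊥ : Ideal R).IsPrime :=
        maximalIdeal_eq_bot_of_mem_minimalPrimes hmin ▸ inferInstance
      exact IsDomain.of_bot_isPrime R
    · obtain ⟨x, hx, hx_sq, hx_min⟩ :=
        exists_mem_maximalIdeal_notMem_sq_notMem_minimalPrimes hmin
      have := isRegularLocalRing_quotient_span_singleton hx hx_sq
      have hlt : (maximalIdeal (R ⧸ Ideal.span {x})).spanFinrank < n := by
        rw [← map_maximalIdeal_of_surjective _ Ideal.Quotient.mk_surjective, ← hn]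
        exact spanFinrank_map_maximalIdeal_quotient_add_one_le hx hx_sq
      have hprime := (Ideal.Quotient.isDomain_iff_prime (Ideal.span {x})).mp (ih _ hlt _ rfl)
      exact isDomain_of_isPrime_span_singleton (maximalIdeal_le_jacobson _ hx) hprime hx_min

theorem exists_isWeaklyRegular_pair_mem_maximalIdeal {R : Type*} [CommRing R]
    [IsRegularLocalRing R] (hdim : 2 ≤ ringKrullDim R) :
    ∃ x ∈ maximalIdeal R, ∃ y ∈ maximalIdeal R, IsWeaklyRegular R [x, y] := by
  have := isDomain_of_isRegularLocalRing R
  have hrank : 2 ≤ (maximalIdeal R).spanFinrank := by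
    exact_mod_cast hdim.trans (ringKrullDim_le_spanFinrank_maximalIdeal R)
  have hmin : maximalIdeal R ∉ minimalPrimes R := fun h ↦ by
    simp [maximalIdeal_eq_bot_of_mem_minimalPrimes h] at hrank
  obtain ⟨x, hx, hx_sq, -⟩ := exists_mem_maximalIdeal_notMem_sq_notMem_minimalPrimes hmin
  have := isRegularLocalRing_quotient_span_singleton hx hx_sq
  have hx_ne : x ≠ 0 := fun h ↦ hx_sq (h ▸ zero_mem _)
  have hx_prime : Prime x := (Ideal.span_singleton_prime hx_ne).mp <|
    (Ideal.Quotient.isDomain_iff_prime _).mp (isDomain_of_isRegularLocalRing _)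
  obtain ⟨y, hy, hyx⟩ : ∃ y ∈ maximalIdeal R, y ∉ Ideal.span {x} := by
    by_contra! hle
    have hspan : maximalIdeal R = Ideal.span {x} :=
      le_antisymm hle ((Ideal.span_singleton_le_iff_mem _).mpr hx)
    rw [hspan, Ideal.span, Submodule.spanFinrank_singleton hx_ne] at hrank
    omega
  exact ⟨x, hx, y, hy, isWeaklyRegular_pair_of_prime hx_prime
    (mt Ideal.mem_span_singleton.mpr hyx)⟩

theorem stmt_4_general {R : Type*} [CommRing R] [IsRegularLocalRing R]
    (hdim : 2 ≤ ringKrullDim R) {I J : Ideal R} (hIJ : I ≤ J) (hI : IsFiniteLength R (R ⧸ I)) :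
    Function.Bijective
        (fun φ : (J →ₗ[R] R) => φ.comp (Submodule.inclusion hIJ)) ∧
      Function.Bijective (fun r : R => r • (Submodule.subtype J)) := by
  obtain ⟨x, hx, y, hy, hxy⟩ := exists_isWeaklyRegular_pair_mem_maximalIdeal hdim
  obtain ⟨a, ha, b, hb, hab⟩ :=
    exists_isWeaklyRegular_pair_mem_of_isFiniteLength_quotient hx hy hxy hI
  exact ⟨bijective_comp_inclusion_of_isWeaklyRegular hIJ ha hb hab,
    bijective_smul_subtype_of_isWeaklyRegular (hIJ ha) (hIJ hb) hab⟩

/-- Let `R` be a regular local ring of Krull dimension 2 (with residue field `k`), and let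
`I ⊆ J` be ideals of `R` such that `R/I` and `R/J` have finite length.  Then the
restriction map `Hom_R(J, R) → Hom_R(I, R)` is an isomorphism, and both are isomorphic
to `R` via the map `R ≅ Hom_R(R,R) → Hom_R(J,R)`. -/
theorem stmt_4 (R : Type) [CommRing R] [IsLocalRing R] [IsNoetherianRing R]
    (hreg : (Module.finrank (ResidueField R) (CotangentSpace R) : WithBot ℕ∞)
      = ringKrullDim R)
    (hdim : ringKrullDim R = 2)
    (I J : Ideal R) (hIJ : I ≤ J)
    (hI : IsFiniteLength R (R ⧸ I)) (hJ : IsFiniteLength R (R ⧸ J)) :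
    Function.Bijective
        (fun φ : (J →ₗ[R] R) => φ.comp (Submodule.inclusion hIJ)) ∧
      Function.Bijective (fun r : R => r • (Submodule.subtype J)) := by
  have := (IsRegularLocalRing.iff_finrank_cotangentSpace R).mpr hreg
  exact stmt_4_general hdim.ge hIJ hI
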